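/- arXiv:1711.02935 — 3 statements merged into one kernel-verified Lean document; each statement's English description precedes it below -/
import Mathlib

section
/- Assume (E1), (E2) and (E3) with λ ≤ 0 and (−λ)·τ* ≤ 1/2. Then for every τ ∈ (0, τ*) and all u, v ∈ X there exists a unique minimizer w* ∈ D(E) of the function w ↦ Ψ(τ,u,v;w), i.e. there is exactly one w* ∈ X with E(w*) < +∞ and Ψ(τ,u,v;w*) ≤ Ψ(τ,u,v;w) for all w ∈ X. -/
open Filter

/-- The BDF2 penalization `Ψ(τ,u,v;w) = (1/τ)·d(v,w)² − (1/(4τ))·d(u,w)² + E(w)`. -/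
noncomputable def bdf2Psi {X : Type*} [MetricSpace X] (E : X → EReal) (τ : ℝ) (u v w : X) :
    EReal :=
  ((1 / τ * dist v w ^ 2 - 1 / (4 * τ) * dist u w ^ 2 : ℝ) : EReal) + E w

/-! If two values of `F` lie within `δ` of its infimum, strong convexity tested at a midpoint forces
the two points to be within distance `√(δ / κ)` of each other. Hence minimizing sequences are
Cauchy, their limits are minimizers by lower semicontinuity, and minimizers coincide.

For `F = Ψ(τ, u, v; ·)` the required lower bound comes from the metric part: by the triangle
inequality it is at least `3 / (4 * τ) * d(o, w) ^ 2` up to terms linear in `d(o, w)`, and this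
exceeds the amount `1 / (2 * τs) * d(o, w) ^ 2` that is needed to bound `E` from below. -/

/-- Strong convexity of an extended-real functional on its domain `F ≠ ⊤`, tested at a single
point `z` per pair, which need not be a metric midpoint. The penalty
`(K / 2) * s * (1 - s) * dist x y ^ 2` of `K`-convexity along curves corresponds at `s = 1 / 2` to
`κ = K / 8`. -/
def StronglyMidpointConvex {X : Type*} [PseudoMetricSpace X] (κ : ℝ) (F : X → EReal) : Prop :=
  ∀ x y, F x ≠ ⊤ → F y ≠ ⊤ → ∃ z,
    F z ≤ ((1 / 2 : ℝ) : EReal) * F x + ((1 / 2 : ℝ) : EReal) * F y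
      - ((κ * dist x y ^ 2 : ℝ) : EReal)

namespace StronglyMidpointConvex

theorem mul_sq_dist_le {X : Type*} [PseudoMetricSpace X] {κ : ℝ} {F : X → EReal}
    (hF : StronglyMidpointConvex κ F) {m a : ℝ} (hm : ∀ z, (m : EReal) ≤ F z) {x y : X}
    (hx : F x ≤ a) (hy : F y ≤ a) : κ * dist x y ^ 2 ≤ a - m := by
  obtain ⟨z, hz⟩ :=
    hF x y (hx.trans_lt (EReal.coe_lt_top a)).ne (hy.trans_lt (EReal.coe_lt_top a)).ne
  have hma : (m : EReal) ≤ ((1 / 2 * a + 1 / 2 * a - κ * dist x y ^ 2 : ℝ) : EReal) :=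
    calc (m : EReal) ≤ F z := hm z
      _ ≤ _ := hz
      _ ≤ ((1 / 2 : ℝ) : EReal) * a + ((1 / 2 : ℝ) : EReal) * a
            - ((κ * dist x y ^ 2 : ℝ) : EReal) :=
          EReal.sub_le_sub (by gcongr) le_rfl
      _ = _ := by norm_cast
  linarith [EReal.coe_le_coe_iff.mp hma]

theorem eq_of_forall_le {X : Type*} [MetricSpace X] {κ : ℝ} (hκ : 0 < κ) {F : X → EReal}
    (hF : StronglyMidpointConvex κ F) {x y : X} (hbot : F x ≠ ⊥) (htop : F x ≠ ⊤)
    (hx : ∀ z, F x ≤ F z) (hy : ∀ z, F y ≤ F z) : x = y := by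
  have hFx : ((F x).toReal : EReal) = F x := EReal.coe_toReal htop hbot
  have hdist : κ * dist x y ^ 2 ≤ (F x).toReal - (F x).toReal :=
    hF.mul_sq_dist_le (fun z => hFx.trans_le (hx z)) hFx.ge ((hy x).trans_eq hFx.symm)
  have hsq : dist x y ^ 2 ≤ 0 := nonpos_of_mul_nonpos_right (hdist.trans_eq (sub_self _)) hκ
  exact dist_eq_zero.mp (sq_eq_zero_iff.mp (hsq.antisymm (sq_nonneg _)))

theorem cauchySeq_of_tendsto {X : Type*} [PseudoMetricSpace X] {κ : ℝ} (hκ : 0 < κ)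
    {F : X → EReal} (hF : StronglyMidpointConvex κ F) {m : ℝ} (hm : ∀ z, (m : EReal) ≤ F z)
    {x : ℕ → X} (hx : Tendsto (fun n => F (x n)) atTop (nhds (m : EReal))) : CauchySeq x := by
  refine Metric.cauchySeq_iff.mpr fun ε hε => ?_
  have hlt : (m : EReal) < ((m + κ * (ε / 2) ^ 2 : ℝ) : EReal) :=
    EReal.coe_lt_coe_iff.mpr (lt_add_of_pos_right m (by positivity))
  obtain ⟨N, hN⟩ := eventually_atTop.mp (hx.eventually_le_const hlt)
  refine ⟨N, fun i hi j hj => ?_⟩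
  have hdist : κ * dist (x i) (x j) ^ 2 ≤ κ * (ε / 2) ^ 2 := by
    simpa only [add_sub_cancel_left] using hF.mul_sq_dist_le hm (hN i hi) (hN j hj)
  calc dist (x i) (x j) ≤ ε / 2 :=
        le_of_sq_le_sq (le_of_mul_le_mul_left hdist hκ) (half_pos hε).le
    _ < ε := half_lt_self hε

theorem exists_forall_le {X : Type*} [PseudoMetricSpace X] [CompleteSpace X] {κ : ℝ} (hκ : 0 < κ)
    {F : X → EReal} (hF : StronglyMidpointConvex κ F) (hlsc : LowerSemicontinuous F)
    (hdom : ∃ x, F x ≠ ⊤) (hbdd : ⊥ < ⨅ x, F x) : ∃ x, ∀ y, F x ≤ F y := by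
  obtain ⟨x₀, hx₀⟩ := hdom
  obtain ⟨m, hm⟩ : ∃ m : ℝ, (m : EReal) = ⨅ x, F x :=
    ⟨_, EReal.coe_toReal ((iInf_le F x₀).trans_lt hx₀.lt_top).ne hbdd.ne'⟩
  have hmF : ∀ z, (m : EReal) ≤ F z := fun z => hm.trans_le (iInf_le F z)
  obtain ⟨a, -, ha, haF⟩ := exists_seq_tendsto_sInf (Set.range_nonempty_iff_nonempty.mpr ⟨x₀⟩)
    (OrderBot.bddBelow (Set.range F))
  choose x hx using haF
  have hlim : Tendsto (fun n => F (x n)) atTop (nhds (m : EReal)) := by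
    simpa only [hx, hm, sInf_range] using! ha
  obtain ⟨y, hy⟩ := cauchySeq_tendsto_of_complete (hF.cauchySeq_of_tendsto hκ hmF hlim)
  have hFy : F y ≤ m :=
    hlsc.isClosed_epigraph.mem_of_tendsto (hy.prodMk_nhds hlim)
      (Eventually.of_forall fun n => le_refl (F (x n)))
  exact ⟨y, fun z => hFy.trans (hmF z)⟩

theorem existsUnique_forall_le {X : Type*} [MetricSpace X] [CompleteSpace X] {κ : ℝ} (hκ : 0 < κ)
    {F : X → EReal} (hF : StronglyMidpointConvex κ F) (hlsc : LowerSemicontinuous F)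
    (hdom : ∃ x, F x ≠ ⊤) (hbdd : ⊥ < ⨅ x, F x) : ∃! x, F x ≠ ⊤ ∧ ∀ y, F x ≤ F y := by
  obtain ⟨x, hx⟩ := hF.exists_forall_le hκ hlsc hdom hbdd
  obtain ⟨x₀, hx₀⟩ := hdom
  have htop : F x ≠ ⊤ := ((hx x₀).trans_lt hx₀.lt_top).ne
  have hbot : F x ≠ ⊥ := (hbdd.trans_le (iInf_le F x)).ne'
  exact ⟨x, ⟨htop, hx⟩, fun y hy => (hF.eq_of_forall_le hκ hbot htop hx hy.2).symm⟩

end StronglyMidpointConvex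

theorem lowerSemicontinuous_of_le_liminf_seq {X β : Type*} [TopologicalSpace X] [SequentialSpace X]
    [CompleteLinearOrder β] {f : X → β}
    (hf : ∀ (u : ℕ → X) (x : X), Tendsto u atTop (nhds x) →
      f x ≤ liminf (fun n => f (u n)) atTop) :
    LowerSemicontinuous f :=
  lowerSemicontinuous_iff_isClosed_preimage.mpr fun b => IsSeqClosed.isClosed fun u x hu hx =>
    (hf u x hx).trans (liminf_le_of_frequently_le (Frequently.of_forall hu))

theorem half_sq_dist_add_le {X : Type*} [PseudoMetricSpace X] (o u v w : X) :
    1 / 2 * dist o w ^ 2 + (dist v o ^ 2 - 1 / 4 * dist u o ^ 2 - (2 * dist v o + dist u o / 2) ^ 2)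
      ≤ dist v w ^ 2 - 1 / 4 * dist u w ^ 2 := by
  have hv : (dist o w - dist v o) ^ 2 ≤ dist v w ^ 2 := by
    refine sq_le_sq' ?_ ?_
    · linarith [dist_triangle v w o, dist_comm o w]
    · linarith [dist_triangle o v w, dist_comm o v]
  have hu : dist u w ^ 2 ≤ (dist u o + dist o w) ^ 2 :=
    pow_le_pow_left₀ dist_nonneg (dist_triangle u o w) 2
  -- Completing the square absorbs the term linear in `dist o w`.
  have hsquare : 0 ≤ (dist o w / 2 - (2 * dist v o + dist u o / 2)) ^ 2 := sq_nonneg _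
  linarith

section BDF2

variable {X : Type*} [MetricSpace X] {E : X → EReal} {τ τs : ℝ}

theorem bdf2Psi_ne_top_iff {u v w : X} : bdf2Psi E τ u v w ≠ ⊤ ↔ E w ≠ ⊤ :=
  EReal.add_ne_top_iff_ne_top_right (EReal.coe_ne_bot _) (EReal.coe_ne_top _)

theorem lowerSemicontinuous_bdf2Psi (hE : LowerSemicontinuous E) (u v : X) :
    LowerSemicontinuous (bdf2Psi E τ u v) := by
  have hmetric : Continuous fun w =>
      ((1 / τ * dist v w ^ 2 - 1 / (4 * τ) * dist u w ^ 2 : ℝ) : EReal) :=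
    continuous_coe_real_ereal.comp (by fun_prop)
  exact hmetric.lowerSemicontinuous.add' hE fun w =>
    EReal.continuousAt_add (.inl (EReal.coe_ne_top _)) (.inl (EReal.coe_ne_bot _))

theorem exists_sq_dist_add_le_bdf2_metric_part (hτ : 0 < τ) (hττs : τ ≤ τs) (o u v : X) :
    ∃ k : ℝ, ∀ w, k + 1 / (2 * τs) * dist o w ^ 2
      ≤ 1 / τ * dist v w ^ 2 - 1 / (4 * τ) * dist u w ^ 2 := by
  refine ⟨1 / τ * (dist v o ^ 2 - 1 / 4 * dist u o ^ 2 - (2 * dist v o + dist u o / 2) ^ 2),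
    fun w => ?_⟩
  have hsteps : 1 / (2 * τs) * dist o w ^ 2 ≤ 1 / (2 * τ) * dist o w ^ 2 := by gcongr
  have hscaled := mul_le_mul_of_nonneg_left (half_sq_dist_add_le o u v w) (one_div_pos.mpr hτ).le
  have hhalf : 1 / (2 * τ) = 1 / τ * (1 / 2) := by ring
  have hquarter : 1 / (4 * τ) = 1 / τ * (1 / 4) := by ring
  rw [hhalf] at hsteps
  rw [hquarter]
  linarith

theorem bot_lt_iInf_bdf2Psi (hτ : 0 < τ) (hττs : τ ≤ τs) {o : X}
    (hE : ⊥ < ⨅ w, ((1 / (2 * τs) * dist o w ^ 2 : ℝ) : EReal) + E w) (u v : X) :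
    ⊥ < ⨅ w, bdf2Psi E τ u v w := by
  obtain ⟨k, hk⟩ := exists_sq_dist_add_le_bdf2_metric_part hτ hττs o u v
  refine (EReal.bot_lt_add_iff.mpr ⟨EReal.bot_lt_coe k, hE⟩).trans_le (le_iInf fun w => ?_)
  calc (k : EReal) + ⨅ w, ((1 / (2 * τs) * dist o w ^ 2 : ℝ) : EReal) + E w
      ≤ k + (((1 / (2 * τs) * dist o w ^ 2 : ℝ) : EReal) + E w) := by gcongr; exact iInf_le _ w
    _ = ((k + 1 / (2 * τs) * dist o w ^ 2 : ℝ) : EReal) + E w := by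
        rw [← add_assoc, EReal.coe_add]
    _ ≤ bdf2Psi E τ u v w := by
        unfold bdf2Psi
        gcongr
        exact hk w

theorem stronglyMidpointConvex_bdf2Psi_of_convex_along_curves {u v : X} {K : ℝ}
    (hconv : ∀ x y : X, E x ≠ ⊤ → E y ≠ ⊤ → ∃ γ : ℝ → X, ∀ s ∈ Set.Icc (0 : ℝ) 1,
      bdf2Psi E τ u v (γ s)
        ≤ ((1 - s : ℝ) : EReal) * bdf2Psi E τ u v x + ((s : ℝ) : EReal) * bdf2Psi E τ u v y
          - ((1 / 2 * K * s * (1 - s) * dist x y ^ 2 : ℝ) : EReal)) :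
    StronglyMidpointConvex (K / 8) (bdf2Psi E τ u v) := by
  intro x y hx hy
  obtain ⟨γ, hγ⟩ := hconv x y (bdf2Psi_ne_top_iff.mp hx) (bdf2Psi_ne_top_iff.mp hy)
  refine ⟨γ (1 / 2), (hγ (1 / 2) (by norm_num)).trans_eq ?_⟩
  congr 3
  · norm_num
  · ring

theorem bdf2_convexity_modulus_pos {lam : ℝ} (hτ : 0 < τ) (hττs : τ < τs)
    (hlam : -lam * τs ≤ 3 / 2) : 0 < 3 / (2 * τ) + lam := by
  have hlamτ : -lam * τ < 3 / 2 := by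
    rcases le_or_gt 0 lam with hnonneg | hneg <;> nlinarith
  have hfrac : 3 / (2 * τ) + lam = (3 / 2 + lam * τ) / τ := by field_simp
  rw [hfrac]
  exact div_pos (by linarith) hτ

theorem bdf2Psi_existsUnique_minimizer_general [CompleteSpace X] (hdom : ∃ w, E w ≠ ⊤)
    (hlsc : LowerSemicontinuous E) (hτ : 0 < τ) (hττs : τ ≤ τs) {o : X}
    (hbdd : ⊥ < ⨅ w, ((1 / (2 * τs) * dist o w ^ 2 : ℝ) : EReal) + E w) {u v : X} {κ : ℝ}
    (hκ : 0 < κ) (hconv : StronglyMidpointConvex κ (bdf2Psi E τ u v)) :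
    ∃! ws : X, E ws ≠ ⊤ ∧ ∀ w : X, bdf2Psi E τ u v ws ≤ bdf2Psi E τ u v w := by
  simpa only [bdf2Psi_ne_top_iff] using hconv.existsUnique_forall_le hκ
    (lowerSemicontinuous_bdf2Psi hlsc u v) (hdom.imp fun _ => bdf2Psi_ne_top_iff.mpr)
    (bot_lt_iInf_bdf2Psi hτ hττs hbdd u v)

end BDF2

/-- Under assumptions (E1), (E2), (E3) with `λ ≤ 0` and `(−λ)τ* ≤ 1/2`,
for every `τ ∈ (0,τ*)` and all `u, v ∈ X` the BDF2 penalization `Ψ(τ,u,v;·)` admits a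
unique minimizer, which lies in the domain of `E`. -/
theorem bdf2Psi_existsUnique_minimizer {X : Type*} [MetricSpace X] [CompleteSpace X]
    [TopologicalSpace.SeparableSpace X]
    (E : X → EReal) (hbot : ∀ w, E w ≠ ⊥) (hdom : ∃ w, E w ≠ ⊤)
    (τs lam : ℝ) (hτs : 0 < τs) (hlam : lam ≤ 0) (hlamτs : (-lam) * τs ≤ 1 / 2)
    (hE1 : ∀ (un : ℕ → X) (x : X), Tendsto un atTop (nhds x) →
      E x ≤ liminf (fun n => E (un n)) atTop)
    (ustar : X) (cstar : EReal)
    (hcstar : cstar = ⨅ v : X, (((1 / (2 * τs)) * dist ustar v ^ 2 : ℝ) : EReal) + E v)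
    (hE2 : ⊥ < cstar)
    (hE3 : ∀ τ ∈ Set.Ioo (0 : ℝ) τs, ∀ u v γ₀ γ₁ : X, E γ₀ ≠ ⊤ → E γ₁ ≠ ⊤ →
      ∃ γ : ℝ → X, ContinuousOn γ (Set.Icc 0 1) ∧ γ 0 = γ₀ ∧ γ 1 = γ₁ ∧
        ∀ s ∈ Set.Icc (0 : ℝ) 1,
          bdf2Psi E τ u v (γ s)
            ≤ ((1 - s : ℝ) : EReal) * bdf2Psi E τ u v γ₀
              + ((s : ℝ) : EReal) * bdf2Psi E τ u v γ₁
              - ((1 / 2 * (3 / (2 * τ) + lam) * s * (1 - s) * dist γ₀ γ₁ ^ 2 : ℝ) : EReal))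
    (τ : ℝ) (hτ : τ ∈ Set.Ioo 0 τs) (u v : X) :
    ∃! ws : X, E ws ≠ ⊤ ∧ ∀ w : X, bdf2Psi E τ u v ws ≤ bdf2Psi E τ u v w := by
  have hpos : 0 < 3 / (2 * τ) + lam := bdf2_convexity_modulus_pos hτ.1 hτ.2 (by linarith)
  have hconv : StronglyMidpointConvex ((3 / (2 * τ) + lam) / 8) (bdf2Psi E τ u v) :=
    stronglyMidpointConvex_bdf2Psi_of_convex_along_curves fun x y hx hy =>
      (hE3 τ hτ u v x y hx hy).imp fun _ hγ => hγ.2.2.2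
  exact bdf2Psi_existsUnique_minimizer_general hdom (lowerSemicontinuous_of_le_liminf_seq hE1)
    hτ.1 hτ.2.le (hcstar ▸ hE2) (by positivity) hconv
end

section
/- (Main convergence theorem, part 2: the limit is an EVI gradient flow.) Under the hypotheses and notation of the main convergence theorem (assumptions (E1)–(E3) with λ ≤ 0, (−λ)·τ* ≤ 1/2; step sizes τₙ ↓ 0 strictly decreasing with τₙ/τ_{n+1} ∈ ℕ; initial data satisfying (I0)–(I2) with n-independent constants and d(u_{τₙ}^0, u⁰) ≤ K₃τₙ), the locally uniform limit u_* of the piecewise constant interpolations ū_{τₙ} satisfies: (i) u_* ∈ AC²([0,∞), X), i.e. there exists a locally square-integrable function m : [0,∞) → ℝ with d(u_*(s), u_*(t)) ≤ ∫_s^t m(r) dr for all 0 ≤ s ≤ t; and (ii) u_* satisfies the integrated evolution variational inequality: for all 0 ≤ s ≤ t and all w ∈ D(E), (1/2)·d(u_*(t), w)² − (1/2)·d(u_*(s), w)² ≤ ∫_s^t [E(w) − E(u_*(r)) − (λ/2)·d(u_*(r), w)²] dr. -/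
open Filter MeasureTheory

/-- Piecewise constant interpolation of a (index-shifted) discrete solution `u : ℕ → X`,
where `u (k+1)` encodes `u_τ^k`. -/
noncomputable def bdf2Interp {X : Type*} (u : ℕ → X) (τ t : ℝ) : X :=
  u (⌈t / τ⌉₊ + 1)

/-!
Testing the minimality of a BDF2 step against the points supplied by the convexity assumption yields
a variational inequality for each step. With the previous iterate as test point it gives an energy
inequality, hence a bound on the action of the discrete trajectories. With a general test point `w`
it says that a Lyapunov functional, which differs from half the squared distance to `w` only by
quantities of the order of one step, decreases at the rate prescribed by the evolution variational
inequality; summation and lower semicontinuity of the energy then give the inequality for the limit.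

An ultralimit `V` of the discrete actions satisfies `d(u_*(s), u_*(t))² ≤ (t - s) (V t - V s)`. As
`V` is monotone, it is differentiable almost everywhere, and `√V'` is a square integrable bound on
the speed of `u_*`, although `V` itself may jump.
-/

section

open Set Topology

section Preliminaries

lemma lowerSemicontinuous_of_seq_le_liminf {α β : Type*} [TopologicalSpace α] [SequentialSpace α]
    [CompleteLinearOrder β] {f : α → β}
    (h : ∀ (x : ℕ → α) (a : α), Tendsto x atTop (𝓝 a) → f a ≤ liminf (fun n => f (x n)) atTop) :
    LowerSemicontinuous f :=
  lowerSemicontinuous_iff_isClosed_preimage.2 fun y => IsSeqClosed.isClosed fun x a hx ha =>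
    (h x a ha).trans ((liminf_le_liminf (Eventually.of_forall hx)).trans (liminf_const y).le)

lemma exists_ultrafilter_forall_tendsto {ι α : Type*} {l : Filter ι} [l.NeBot] {S : ι → α → ℝ}
    {s : Set α} (h : ∀ a ∈ s, ∃ C, ∀ᶠ i in l, |S i a| ≤ C) :
    ∃ 𝓤 : Ultrafilter ι, ↑𝓤 ≤ l ∧ ∃ V : α → ℝ, ∀ a ∈ s, Tendsto (fun i => S i a) 𝓤 (𝓝 (V a)) := by
  have hle : ↑(Ultrafilter.of l) ≤ l := Ultrafilter.of_le l
  have hlim : ∀ a ∈ s, ∃ V, Tendsto (fun i => S i a) (Ultrafilter.of l) (𝓝 V) := by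
    intro a ha
    obtain ⟨C, hC⟩ := h a ha
    obtain ⟨V, -, hV⟩ := isCompact_Icc.ultrafilter_le_nhds
      ((Ultrafilter.of l).map fun i => S i a)
      (le_principal_iff.2 ((hC.filter_mono hle).mono fun i hi => abs_le.1 hi))
    exact ⟨V, hV⟩
  choose! V hV using hlim
  exact ⟨Ultrafilter.of l, hle, V, hV⟩

lemma le_integral_of_eventually_le_add {ι α : Type*} [MeasurableSpace α] {μ : Measure α}
    {l : Filter ι} [l.NeBot] [l.IsCountablyGenerated] {F : ι → α → ℝ} {f bound : α → ℝ}
    {A : ι → ℝ} {a : ℝ} (hF : ∀ i, AEStronglyMeasurable (F i) μ) (hf : Integrable f μ)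
    (hbound : Integrable bound μ) (hFbound : ∀ᶠ i in l, ∀ᵐ x ∂μ, |F i x| ≤ bound x)
    (hle : ∀ᵐ x ∂μ, ∀ ε > 0, ∀ᶠ i in l, F i x ≤ f x + ε)
    (hA : Tendsto A l (𝓝 a)) (hAF : ∀ᶠ i in l, A i ≤ ∫ x, F i x ∂μ) : a ≤ ∫ x, f x ∂μ := by
  -- Replacing `F i` by `max (F i) f` turns the one-sided estimate into pointwise convergence.
  have hlim : Tendsto (fun i => ∫ x, max (F i x) (f x) ∂μ) l (𝓝 (∫ x, f x ∂μ)) := by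
    refine tendsto_integral_filter_of_dominated_convergence (fun x => bound x + |f x|)
      (Eventually.of_forall fun i => (hF i).sup hf.aestronglyMeasurable) ?_ (hbound.add hf.abs) ?_
    · filter_upwards [hFbound] with i hi
      filter_upwards [hi] with x hx
      exact abs_max_le_max_abs_abs.trans (max_le (hx.trans (le_add_of_nonneg_right (abs_nonneg _)))
        (le_add_of_nonneg_left ((abs_nonneg _).trans hx)))
    · filter_upwards [hle] with x hx
      refine tendsto_order.2 ⟨fun b hb => Eventually.of_forall fun i => lt_max_of_lt_right hb,
        fun b hb => ?_⟩
      filter_upwards [hx ((b - f x) / 2) (by linarith)] with i hi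
      exact max_lt (by linarith) hb
  refine le_of_tendsto_of_tendsto hA hlim ?_
  filter_upwards [hAF, hFbound] with i hAi hi
  have hFi : Integrable (F i) μ := hbound.mono' (hF i) hi
  exact hAi.trans (integral_mono hFi (hFi.sup hf) fun x => le_max_left _ _)

lemma abs_integral_sub_integral_le {g : ℝ → ℝ} {a b C : ℝ} (hg : IntegrableOn g (Icc a b))
    (hC : ∀ x ∈ Icc a b, |g x| ≤ C) {p q s t : ℝ} (hp : p ∈ Icc a b) (hq : q ∈ Icc a b)
    (hs : s ∈ Icc a b) (ht : t ∈ Icc a b) :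
    |(∫ x in p..q, g x) - ∫ x in s..t, g x| ≤ C * (|s - p| + |q - t|) := by
  have hint : ∀ {x y}, x ∈ Icc a b → y ∈ Icc a b → IntervalIntegrable g volume x y :=
    fun hx hy => (hg.mono_set (uIcc_subset_Icc hx hy)).intervalIntegrable
  have hle : ∀ {x y}, x ∈ Icc a b → y ∈ Icc a b → |∫ z in x..y, g z| ≤ C * |y - x| := by
    intro x y hx hy
    rw [← Real.norm_eq_abs]
    exact intervalIntegral.norm_integral_le_of_norm_le_const fun z hz =>
      hC z (uIcc_subset_Icc hx hy (uIoc_subset_uIcc hz))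
  rw [intervalIntegral.integral_interval_sub_interval_comm (hint hp hq) (hint hs ht) (hint hp hs)]
  calc |(∫ x in p..s, g x) - ∫ x in q..t, g x|
      ≤ |∫ x in p..s, g x| + |∫ x in q..t, g x| := abs_sub _ _
    _ ≤ C * |s - p| + C * |t - q| := add_le_add (hle hp hs) (hle hq ht)
    _ = C * (|s - p| + |q - t|) := by rw [abs_sub_comm t q, mul_add]

lemma measurable_comp_bdf2Interp {X β : Type*} [MeasurableSpace β] (f : X → β) (v : ℕ → X)
    (τ : ℝ) : Measurable fun r => f (bdf2Interp v τ r) :=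
  (measurable_from_nat (f := fun k => f (v (k + 1)))).comp
    (Nat.measurable_ceil.comp (measurable_id.div_const τ))

end Preliminaries

section BoundedBelow

variable {X : Type*} [PseudoMetricSpace X] {E : X → EReal}

/-- The functional `E` is bounded below by a real number on every bounded set. This is what
assumption (E2) is used for. -/
def BddBelowOnBounded (E : X → EReal) : Prop :=
  ∀ s : Set X, Bornology.IsBounded s → ∃ b : ℝ, ∀ x ∈ s, (b : EReal) ≤ E x

lemma BddBelowOnBounded.ne_bot (h : BddBelowOnBounded E) (x : X) : E x ≠ ⊥ := by
  obtain ⟨b, hb⟩ := h {x} Bornology.isBounded_singleton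
  exact ne_bot_of_le_ne_bot (EReal.coe_ne_bot b) (hb x rfl)

lemma bddBelowOnBounded_of_bot_lt_iInf {κ : ℝ} {x₀ : X}
    (h : ⊥ < ⨅ v, ((κ * dist x₀ v ^ 2 : ℝ) : EReal) + E v) : BddBelowOnBounded E := by
  intro s hs
  obtain ⟨c, -, hc⟩ := EReal.lt_iff_exists_real_btwn.1 h
  obtain ⟨R, hR⟩ := (Metric.isBounded_iff_subset_closedBall x₀).1 hs
  refine ⟨c - |κ| * R ^ 2, fun x hx => ?_⟩
  have hκ : κ * dist x₀ x ^ 2 ≤ |κ| * R ^ 2 := by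
    have hxR : dist x₀ x ≤ R := dist_comm x x₀ ▸ hR hx
    gcongr
    exact le_abs_self κ
  rw [EReal.coe_sub]
  refine EReal.sub_le_of_le_add' (hc.le.trans ((iInf_le _ x).trans ?_))
  gcongr

end BoundedBelow

section ActionBound

variable {Y : Type*} [PseudoMetricSpace Y] {f : ℝ → Y} {V φ : ℝ → ℝ} {s t : ℝ} {S : Set ℝ}

/-- `V` dominates the action of the curve `f` on `S`. For an absolutely continuous curve, Hölder's
inequality gives this with `V` a primitive of the squared metric speed; here `V` may be arbitrary,
in particular it may jump. -/
def ActionBoundOn (f : ℝ → Y) (V : ℝ → ℝ) (S : Set ℝ) : Prop :=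
  ∀ x ∈ S, ∀ y ∈ S, x ≤ y → dist (f x) (f y) ^ 2 ≤ (y - x) * (V y - V x)

namespace ActionBoundOn

lemma mono {S' : Set ℝ} (h : ActionBoundOn f V S) (hS : S' ⊆ S) : ActionBoundOn f V S' :=
  fun x hx y hy => h x (hS hx) y (hS hy)

lemma dist_left (h : ActionBoundOn f V S) (z : Y) :
    ActionBoundOn (fun r => dist z (f r)) V S := fun x hx y hy hxy =>
  (pow_le_pow_left₀ dist_nonneg (dist_dist_dist_le_right z (f x) (f y)) 2).trans
    (h x hx y hy hxy)

lemma monotoneOn (h : ActionBoundOn f V S) : MonotoneOn V S := by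
  intro x hx y hy hxy
  rcases hxy.eq_or_lt with rfl | hlt
  · exact le_rfl
  · exact sub_nonneg.1 <|
      nonneg_of_mul_nonneg_right ((sq_nonneg _).trans (h x hx y hy hxy)) (sub_pos.2 hlt)

lemma sq_sub_le (h : ActionBoundOn φ V S) {x y : ℝ} (hx : x ∈ S) (hy : y ∈ S) (hxy : x ≤ y) :
    (φ y - φ x) ^ 2 ≤ (y - x) * (V y - V x) := by
  simpa only [dist_comm (φ x), Real.dist_eq, sq_abs] using h x hx y hy hxy

lemma monotoneOn_quadratic (h : ActionBoundOn φ V S) (η : ℝ) :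
    MonotoneOn (fun r => r + η ^ 2 * V r - 2 * η * φ r) S := by
  intro x hx y hy hxy
  have hφ := h.sq_sub_le hx hy hxy
  have hV := sub_nonneg.2 (h.monotoneOn hx hy hxy)
  have amgm : 2 * (η * (φ y - φ x)) ≤ (y - x) + η ^ 2 * (V y - V x) :=
    two_mul_le_add_of_sq_le_mul (sub_nonneg.2 hxy) (by positivity) <| by
      rw [mul_pow, mul_left_comm]
      gcongr
  simp only
  linarith

lemma deriv_le_sqrt_deriv (h : ActionBoundOn φ V S) {x : ℝ} (hx : S ∈ 𝓝 x)
    (hφ : DifferentiableAt ℝ φ x) (hV : DifferentiableAt ℝ V x) :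
    deriv φ x ≤ √(deriv V x) := by
  have hslopeφ := hφ.hasDerivAt.tendsto_slope.mono_left (nhdsGT_le_nhdsNE x)
  have hslopeV := hV.hasDerivAt.tendsto_slope.mono_left (nhdsGT_le_nhdsNE x)
  refine Real.le_sqrt_of_sq_le (le_of_tendsto_of_tendsto (hslopeφ.pow 2) hslopeV ?_)
  filter_upwards [self_mem_nhdsWithin, mem_nhdsWithin_of_mem_nhds hx] with y hxy hy
  have hpos : 0 < y - x := sub_pos.2 hxy
  rw [slope_def_field, slope_def_field, div_pow, div_le_div_iff₀ (by positivity) hpos]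
  calc (φ y - φ x) ^ 2 * (y - x) ≤ (y - x) * (V y - V x) * (y - x) := by
        gcongr
        exact h.sq_sub_le (mem_of_mem_nhds hx) hy hxy.le
    _ = (V y - V x) * (y - x) ^ 2 := by ring

lemma ae_differentiableAt (h : ActionBoundOn φ V (Icc s t)) :
    ∀ᵐ x, x ∈ Ioo s t → DifferentiableAt ℝ φ x ∧ DifferentiableAt ℝ V x := by
  filter_upwards [h.monotoneOn.ae_differentiableWithinAt_of_mem,
    (h.monotoneOn_quadratic 1).ae_differentiableWithinAt_of_mem] with x hVx hQx hx
  have hnhds := Icc_mem_nhds hx.1 hx.2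
  have hV := (hVx (Ioo_subset_Icc_self hx)).differentiableAt hnhds
  have hQ := (hQx (Ioo_subset_Icc_self hx)).differentiableAt hnhds
  have hφ : φ = fun r => 1 / 2 * (r + V r - (r + 1 ^ 2 * V r - 2 * 1 * φ r)) := by
    funext r
    ring
  exact ⟨hφ ▸ ((differentiableAt_fun_id.fun_add hV).fun_sub hQ).const_mul _, hV⟩

lemma intervalIntegrable_sqrt_deriv (h : ActionBoundOn f V (Icc s t)) (hst : s ≤ t) :
    IntervalIntegrable (fun r => √(deriv V r)) volume s t := by
  have hV := (uIcc_of_le hst ▸ h.monotoneOn).intervalIntegrable_deriv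
  refine (hV.norm.add intervalIntegrable_const).mono_fun'
    (g := fun r => ‖deriv V r‖ + 1) (measurable_deriv V).sqrt.aestronglyMeasurable
    (Eventually.of_forall fun r => ?_)
  change ‖√(deriv V r)‖ ≤ ‖deriv V r‖ + 1
  rw [Real.norm_of_nonneg (Real.sqrt_nonneg _), Real.sqrt_le_iff, Real.norm_eq_abs]
  exact ⟨by positivity, by nlinarith [le_abs_self (deriv V r), abs_nonneg (deriv V r)]⟩

lemma ae_le_deriv_quadratic (h : ActionBoundOn φ V (Icc s t)) {η : ℝ} (hη : 0 ≤ η) :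
    ∀ᵐ x, x ∈ Ioo s t → 1 + η ^ 2 * deriv V x - 2 * η * √(deriv V x)
      ≤ deriv (fun r => r + η ^ 2 * V r - 2 * η * φ r) x := by
  filter_upwards [h.ae_differentiableAt] with x hdiff hx
  obtain ⟨hφx, hVx⟩ := hdiff hx
  have hQx : HasDerivAt (fun r => r + η ^ 2 * V r - 2 * η * φ r)
      (1 + η ^ 2 * deriv V x - 2 * η * deriv φ x) x :=
    ((hasDerivAt_id x).add (hVx.hasDerivAt.const_mul _)).sub (hφx.hasDerivAt.const_mul _)
  rw [hQx.deriv]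
  gcongr
  exact h.deriv_le_sqrt_deriv (Icc_mem_nhds hx.1 hx.2) hφx hVx

lemma sub_le_integral_sqrt_deriv_add (h : ActionBoundOn φ V (Icc s t)) (hst : s ≤ t) {η : ℝ}
    (hη : 0 < η) : φ t - φ s
      ≤ (∫ r in s..t, √(deriv V r)) + η / 2 * (V t - V s - ∫ r in s..t, deriv V r) := by
  -- `V` and `Q` may have singular parts, so only `∫ Q' ≤ Q t - Q s` is available; the singular part
  -- of `V` then enters with the factor `η / 2`, which tends to zero.
  set Q : ℝ → ℝ := fun r => r + η ^ 2 * V r - 2 * η * φ r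
  have hmono : MonotoneOn Q (uIcc s t) := uIcc_of_le hst ▸ h.monotoneOn_quadratic η
  have hupper : ∫ r in s..t, deriv Q r ≤ Q t - Q s := by
    have hQ := hmono.intervalIntegral_deriv_mem_uIcc
    rw [uIcc_of_le (sub_nonneg.2 (hmono left_mem_uIcc right_mem_uIcc hst))] at hQ
    exact hQ.2
  have hV : IntervalIntegrable (deriv V) volume s t :=
    (uIcc_of_le hst ▸ h.monotoneOn).intervalIntegrable_deriv
  have haffine : IntervalIntegrable (fun r => 1 + η ^ 2 * deriv V r) volume s t :=
    intervalIntegrable_const.add (hV.const_mul _)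
  have hsqrt := (h.intervalIntegrable_sqrt_deriv hst).const_mul (2 * η)
  have hlower : ∫ r in s..t, (1 + η ^ 2 * deriv V r - 2 * η * √(deriv V r))
      ≤ ∫ r in s..t, deriv Q r := by
    refine intervalIntegral.integral_mono_ae_restrict hst (haffine.sub hsqrt)
      hmono.intervalIntegrable_deriv ?_
    rw [EventuallyLE, ← restrict_Ioo_eq_restrict_Icc, ae_restrict_iff' measurableSet_Ioo]
    exact h.ae_le_deriv_quadratic hη.le
  rw [intervalIntegral.integral_sub haffine hsqrt,
    intervalIntegral.integral_add intervalIntegrable_const (hV.const_mul _),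
    intervalIntegral.integral_const, intervalIntegral.integral_const_mul,
    intervalIntegral.integral_const_mul, smul_eq_mul, mul_one] at hlower
  have hquad := hlower.trans hupper
  simp only [Q] at hquad
  refine le_of_mul_le_mul_left ?_ (mul_pos two_pos hη)
  linarith

lemma dist_le_integral_sqrt_deriv (h : ActionBoundOn f V (Icc s t)) (hst : s ≤ t) :
    dist (f s) (f t) ≤ ∫ r in s..t, √(deriv V r) := by
  have hlim : Tendsto (fun η : ℝ => (∫ r in s..t, √(deriv V r))
      + η / 2 * (V t - V s - ∫ r in s..t, deriv V r)) (𝓝[>] 0)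
      (𝓝 (∫ r in s..t, √(deriv V r))) := by
    refine (Continuous.tendsto' (by fun_prop) _ _ ?_).mono_left nhdsWithin_le_nhds
    ring
  refine ge_of_tendsto hlim ?_
  filter_upwards [self_mem_nhdsWithin] with η hη
  simpa using (h.dist_left (f s)).sub_le_integral_sqrt_deriv_add hst hη

theorem exists_sq_integrable_speed {a : ℝ} (h : ActionBoundOn f V (Ici a)) :
    ∃ m : ℝ → ℝ, (∀ T, a < T → IntegrableOn (fun r => m r ^ 2) (Icc a T) volume) ∧
      ∀ s t, a ≤ s → s ≤ t → dist (f s) (f t) ≤ ∫ r in s..t, m r := by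
  refine ⟨fun r => √(deriv V r), fun T hT => ?_, fun s t hs hst =>
    (h.mono (Icc_subset_Ici_self.trans (Ici_subset_Ici.2 hs))).dist_le_integral_sqrt_deriv hst⟩
  have hV : MonotoneOn V (uIcc a T) := uIcc_of_le hT.le ▸ (h.mono Icc_subset_Ici_self).monotoneOn
  have hint := (intervalIntegrable_iff_integrableOn_Icc_of_le hT.le).1 hV.intervalIntegrable_deriv
  refine IntegrableOn.congr_fun hint.pos_part (fun r _ => ?_) measurableSet_Icc
  change max (deriv V r) 0 = √(deriv V r) ^ 2
  rcases le_total 0 (deriv V r) with hnonneg | hnonpos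
  · rw [Real.sq_sqrt hnonneg, max_eq_left hnonneg]
  · rw [Real.sqrt_eq_zero_of_nonpos hnonpos, max_eq_right hnonpos, zero_pow two_ne_zero]

end ActionBoundOn
end ActionBound

section Discrete

variable {X : Type*} [PseudoMetricSpace X] {E : X → EReal} {τ lam : ℝ}

/-- The integrand of the evolution variational inequality tested with `w`, at the point `x`. -/
noncomputable def eviRate (E : X → EReal) (lam : ℝ) (w x : X) : ℝ :=
  (E w).toReal - (E x).toReal - lam / 2 * dist x w ^ 2

/-- The variational inequality satisfied by BDF2 minimizers, multiplied by the step size `τ`: the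
discrete counterpart of the evolution variational inequality. -/
def IsDiscreteEVI (E : X → EReal) (τ lam : ℝ) (v : ℕ → X) : Prop :=
  ∀ k w, E w ≠ ⊤ →
    dist (v (k + 1)) (v (k + 2)) ^ 2 - 1 / 4 * dist (v k) (v (k + 2)) ^ 2
        + 3 / 4 * dist (v (k + 2)) w ^ 2
      ≤ dist (v (k + 1)) w ^ 2 - 1 / 4 * dist (v k) w ^ 2 + τ * eviRate E lam w (v (k + 2))

lemma sq_dist_two_step_le (v : ℕ → X) (k : ℕ) : dist (v k) (v (k + 2)) ^ 2
    ≤ 2 * (dist (v k) (v (k + 1)) ^ 2 + dist (v (k + 1)) (v (k + 2)) ^ 2) :=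
  (pow_le_pow_left₀ dist_nonneg (dist_triangle _ _ _) 2).trans add_sq_le

namespace IsDiscreteEVI

variable {v : ℕ → X}

lemma energy_step (h : IsDiscreteEVI E τ lam v) (hlam : -lam * τ ≤ 1 / 2) {k : ℕ}
    (hk : E (v (k + 1)) ≠ ⊤) :
    τ * (E (v (k + 2))).toReal + dist (v (k + 1)) (v (k + 2)) ^ 2
      ≤ τ * (E (v (k + 1))).toReal + 1 / 4 * dist (v k) (v (k + 1)) ^ 2 := by
  have hstep := h k (v (k + 1)) hk
  rw [eviRate, dist_self, dist_comm (v (k + 2)) (v (k + 1))] at hstep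
  have hlamd := mul_le_mul_of_nonneg_right hlam (sq_nonneg (dist (v (k + 1)) (v (k + 2))))
  linarith [sq_dist_two_step_le v k]

lemma energy_add_sum_sq_le (h : IsDiscreteEVI E τ lam v) (hlam : -lam * τ ≤ 1 / 2)
    (htop : ∀ k, E (v (k + 1)) ≠ ⊤) (N : ℕ) :
    τ * (E (v (N + 1))).toReal + 3 / 4 * ∑ k ∈ Finset.range (N + 1), dist (v k) (v (k + 1)) ^ 2
      ≤ τ * (E (v 1)).toReal + dist (v 0) (v 1) ^ 2 := by
  suffices τ * (E (v (N + 1))).toReal + 1 / 4 * dist (v N) (v (N + 1)) ^ 2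
      + 3 / 4 * ∑ k ∈ Finset.range (N + 1), dist (v k) (v (k + 1)) ^ 2
      ≤ τ * (E (v 1)).toReal + dist (v 0) (v 1) ^ 2 by
    linarith [sq_nonneg (dist (v N) (v (N + 1)))]
  induction N with
  | zero => simp only [zero_add, Finset.sum_range_one]; linarith
  | succ N ih =>
    rw [Finset.sum_range_succ]
    linarith [h.energy_step hlam (htop N)]

end IsDiscreteEVI

/-- The Lyapunov functional of the two-step scheme, relative to the point `w`. The correction
`d(v k, v (k + 1))² / 2` absorbs the numerical dissipation of the scheme. -/
noncomputable def bdf2Lyapunov (v : ℕ → X) (w : X) (k : ℕ) : ℝ :=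
  3 / 4 * dist (v (k + 1)) w ^ 2 - 1 / 4 * dist (v k) w ^ 2 + 1 / 2 * dist (v k) (v (k + 1)) ^ 2

lemma IsDiscreteEVI.bdf2Lyapunov_sub_le_sum {v : ℕ → X} (h : IsDiscreteEVI E τ lam v) {w : X}
    (hw : E w ≠ ⊤) {i j : ℕ} (hij : i ≤ j) :
    bdf2Lyapunov v w j - bdf2Lyapunov v w i
      ≤ ∑ k ∈ Finset.Ico i j, τ * eviRate E lam w (v (k + 2)) := by
  rw [← Finset.sum_Ico_sub (bdf2Lyapunov v w) hij]
  refine Finset.sum_le_sum fun k _ => ?_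
  simp only [bdf2Lyapunov, add_assoc, one_add_one_eq_two]
  linarith [h k w hw, sq_dist_two_step_le v k]

lemma sq_dist_le_mul_sum_sq_step (v : ℕ → X) {i j : ℕ} (hij : i ≤ j) :
    dist (v i) (v j) ^ 2
      ≤ ((j : ℝ) - i) * ∑ k ∈ Finset.Ico i j, dist (v k) (v (k + 1)) ^ 2 := by
  have hcs := sq_sum_le_card_mul_sum_sq (s := Finset.Ico i j)
    (f := fun k => dist (v k) (v (k + 1)))
  rw [Nat.card_Ico, Nat.cast_sub hij] at hcs
  exact (pow_le_pow_left₀ dist_nonneg (dist_le_Ico_sum_dist v hij) 2).trans hcs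

section Interp

variable {t : ℝ}

lemma le_ceil_div_mul (hτ : 0 < τ) (t : ℝ) : t ≤ ⌈t / τ⌉₊ * τ :=
  (div_le_iff₀ hτ).1 (Nat.le_ceil _)

lemma ceil_div_mul_le_add (hτ : 0 < τ) (ht : 0 ≤ t) : ⌈t / τ⌉₊ * τ ≤ t + τ := by
  calc ⌈t / τ⌉₊ * τ ≤ (t / τ + 1) * τ := by
        gcongr
        exact (Nat.ceil_lt_add_one (by positivity)).le
    _ = t + τ := by field_simp

lemma integral_comp_ceil_div (g : ℕ → ℝ) (hτ : 0 < τ) {i j : ℕ} (hij : i ≤ j) :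
    ∫ r in (i * τ)..(j * τ), g ⌈r / τ⌉₊ = ∑ k ∈ Finset.Ico i j, τ * g (k + 1) := by
  have hpiece : ∀ k : ℕ, EqOn (fun _ => g (k + 1)) (fun r => g ⌈r / τ⌉₊)
      (uIoc (k * τ) ((k + 1 : ℕ) * τ)) := by
    intro k r hr
    rw [uIoc_of_le (by gcongr; exact k.le_succ)] at hr
    have hceil : ⌈r / τ⌉₊ = k + 1 := by
      rw [Nat.ceil_eq_iff k.succ_ne_zero, lt_div_iff₀ hτ, div_le_iff₀ hτ]
      exact hr
    exact congrArg g hceil.symm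
  rw [← intervalIntegral.sum_integral_adjacent_intervals_Ico (a := fun k : ℕ => (k : ℝ) * τ) hij
    fun k _ => intervalIntegrable_const.congr (hpiece k)]
  refine Finset.sum_congr rfl fun k _ => ?_
  rw [← intervalIntegral.integral_congr_ae (Eventually.of_forall fun r hr => hpiece k hr),
    intervalIntegral.integral_const, smul_eq_mul, Nat.cast_succ]
  ring

variable (v : ℕ → X)

/-- The action of the piecewise affine interpolation of `v` up to the first grid point after `t`,
including the step from `v 0` to `v 1`. -/
noncomputable def bdf2Action (τ t : ℝ) : ℝ :=
  (∑ k ∈ Finset.range (⌈t / τ⌉₊ + 1), dist (v k) (v (k + 1)) ^ 2) / τ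

lemma bdf2Action_nonneg (hτ : 0 < τ) (t : ℝ) : 0 ≤ bdf2Action v τ t := by
  unfold bdf2Action
  positivity

lemma monotone_bdf2Action (hτ : 0 < τ) : Monotone (bdf2Action v τ) := by
  intro s t hst
  unfold bdf2Action
  gcongr

lemma sq_dist_bdf2Interp_le (hτ : 0 < τ) {s : ℝ} (hs : 0 ≤ s) (hst : s ≤ t) :
    dist (bdf2Interp v τ s) (bdf2Interp v τ t) ^ 2
      ≤ (t - s + τ) * (bdf2Action v τ t - bdf2Action v τ s) := by
  have hij : ⌈s / τ⌉₊ + 1 ≤ ⌈t / τ⌉₊ + 1 := by gcongr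
  calc dist (bdf2Interp v τ s) (bdf2Interp v τ t) ^ 2
      ≤ ((⌈t / τ⌉₊ + 1 : ℕ) - (⌈s / τ⌉₊ + 1 : ℕ) : ℝ)
          * ∑ k ∈ Finset.Ico (⌈s / τ⌉₊ + 1) (⌈t / τ⌉₊ + 1), dist (v k) (v (k + 1)) ^ 2 :=
        sq_dist_le_mul_sum_sq_step v hij
    _ = (⌈t / τ⌉₊ * τ - ⌈s / τ⌉₊ * τ) * (bdf2Action v τ t - bdf2Action v τ s) := by
        rw [Finset.sum_Ico_eq_sub _ hij, bdf2Action, bdf2Action]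
        push_cast
        field_simp
        ring
    _ ≤ (t - s + τ) * (bdf2Action v τ t - bdf2Action v τ s) := by
        gcongr
        · exact sub_nonneg.2 (monotone_bdf2Action v hτ hst)
        · linarith [le_ceil_div_mul hτ s, ceil_div_mul_le_add hτ (hs.trans hst)]

lemma sq_dist_step_le_mul_bdf2Action (hτ : 0 < τ) (t : ℝ) :
    dist (v ⌈t / τ⌉₊) (v (⌈t / τ⌉₊ + 1)) ^ 2 ≤ τ * bdf2Action v τ t := by
  rw [bdf2Action, mul_div_cancel₀ _ hτ.ne']
  exact Finset.single_le_sum (f := fun k => dist (v k) (v (k + 1)) ^ 2)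
    (fun _ _ => sq_nonneg _) (Finset.self_mem_range_succ _)

end Interp

end Discrete

section EviRate

variable {X : Type*} [PseudoMetricSpace X] {E : X → EReal}

lemma measurable_eviRate [MeasurableSpace X] [BorelSpace X] (hE : LowerSemicontinuous E)
    (lam : ℝ) (w : X) : Measurable (eviRate E lam w) :=
  (hE.measurable.ereal_toReal.const_sub _).sub
    (Continuous.measurable (by fun_prop : Continuous fun x => lam / 2 * dist x w ^ 2))

lemma eventually_eviRate_le {x : X} (hE : LowerSemicontinuousAt E x)
    (hbot : E x ≠ ⊥) (htop : E x ≠ ⊤) (lam : ℝ) (w : X) {ε : ℝ} (hε : 0 < ε) :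
    ∀ᶠ y in 𝓝 x, E y ≠ ⊤ → eviRate E lam w y ≤ eviRate E lam w x + ε := by
  have henergy : (((E x).toReal - ε / 2 : ℝ) : EReal) < E x := by
    conv_rhs => rw [← EReal.coe_toReal htop hbot]
    exact EReal.coe_lt_coe_iff.2 (by linarith)
  have hdist : Tendsto (fun y => lam / 2 * dist y w ^ 2) (𝓝 x) (𝓝 (lam / 2 * dist x w ^ 2)) :=
    Continuous.tendsto (by fun_prop) x
  filter_upwards [hE _ henergy, hdist.eventually_const_lt (sub_lt_self _ (half_pos hε))]
    with y hy hdy hytop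
  replace hy : _ < E y := hy
  rw [← EReal.coe_toReal hytop (bot_lt_of_lt hy).ne', EReal.coe_lt_coe_iff] at hy
  unfold eviRate
  linarith

lemma BddBelowOnBounded.exists_abs_eviRate_le (hb : BddBelowOnBounded E) (lam : ℝ) (w : X)
    (M R : ℝ) : ∃ C, ∀ x, E x ≤ M → dist x w ≤ R → |eviRate E lam w x| ≤ C := by
  obtain ⟨b, hb'⟩ := hb (Metric.closedBall w R) Metric.isBounded_closedBall
  refine ⟨|(E w).toReal| + (|b| + |M|) + |lam| / 2 * R ^ 2, fun x hM hR => ?_⟩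
  have hbx := hb' x hR
  have htop : E x ≠ ⊤ := ne_top_of_le_ne_top (EReal.coe_ne_top M) hM
  rw [← EReal.coe_toReal htop (hb.ne_bot x), EReal.coe_le_coe_iff] at hM hbx
  have henergy : |(E x).toReal| ≤ |b| + |M| := abs_le.2
    ⟨by linarith [neg_abs_le b, abs_nonneg M], by linarith [le_abs_self M, abs_nonneg b]⟩
  have hdist : |lam / 2 * dist x w ^ 2| ≤ |lam| / 2 * R ^ 2 := by
    rw [abs_mul, abs_div, abs_two, abs_of_nonneg (sq_nonneg (dist x w))]
    gcongr
  exact (abs_sub _ _).trans (add_le_add ((abs_sub _ _).trans (by gcongr)) hdist)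

lemma IsDiscreteEVI.bdf2Lyapunov_sub_le_integral {τ lam : ℝ} {v : ℕ → X}
    (h : IsDiscreteEVI E τ lam v) (hτ : 0 < τ) {w : X} (hw : E w ≠ ⊤) {s t C : ℝ} (hs : 0 ≤ s)
    (hst : s ≤ t) (hC : ∀ r ∈ Icc 0 (t + τ), |eviRate E lam w (bdf2Interp v τ r)| ≤ C) :
    bdf2Lyapunov v w ⌈t / τ⌉₊ - bdf2Lyapunov v w ⌈s / τ⌉₊ - 2 * C * τ
      ≤ ∫ r in s..t, eviRate E lam w (bdf2Interp v τ r) := by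
  set G : ℝ → ℝ := fun r => eviRate E lam w (bdf2Interp v τ r)
  have ht := hs.trans hst
  have hC0 : 0 ≤ C := (abs_nonneg _).trans (hC 0 ⟨le_rfl, by linarith⟩)
  have hij : ⌈s / τ⌉₊ ≤ ⌈t / τ⌉₊ := by gcongr
  have hs₁ := le_ceil_div_mul hτ s
  have hs₂ := ceil_div_mul_le_add hτ hs
  have ht₁ := le_ceil_div_mul hτ t
  have ht₂ := ceil_div_mul_le_add hτ ht
  have hsum : bdf2Lyapunov v w ⌈t / τ⌉₊ - bdf2Lyapunov v w ⌈s / τ⌉₊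
      ≤ ∫ r in (⌈s / τ⌉₊ * τ)..(⌈t / τ⌉₊ * τ), G r :=
    (h.bdf2Lyapunov_sub_le_sum hw hij).trans_eq
      (integral_comp_ceil_div (fun k => eviRate E lam w (v (k + 1))) hτ hij).symm
  have hG : IntegrableOn G (Icc 0 (t + τ)) :=
    Integrable.mono' (integrable_const C)
      (measurable_comp_bdf2Interp (eviRate E lam w) v τ).aestronglyMeasurable
      ((ae_restrict_mem measurableSet_Icc).mono hC)
  have hshift := abs_integral_sub_integral_le hG hC (p := ⌈s / τ⌉₊ * τ) (q := ⌈t / τ⌉₊ * τ)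
    ⟨by linarith, by linarith⟩ ⟨by linarith, by linarith⟩ ⟨hs, by linarith⟩ ⟨ht, by linarith⟩
  rw [abs_sub_comm s, abs_of_nonneg (sub_nonneg.2 hs₁), abs_of_nonneg (sub_nonneg.2 ht₁)] at hshift
  have hgrid : C * (⌈s / τ⌉₊ * τ - s + (⌈t / τ⌉₊ * τ - t)) ≤ C * (2 * τ) := by
    gcongr
    linarith
  linarith [le_abs_self ((∫ r in (⌈s / τ⌉₊ * τ)..(⌈t / τ⌉₊ * τ), G r) - ∫ r in s..t, G r)]

end EviRate

section Limit

variable {X : Type*} [PseudoMetricSpace X] {E : X → EReal} {lam K₁ K₂ : ℝ} {τ : ℕ → ℝ}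
  {u : ℕ → ℕ → X} {ulim : ℝ → X}

/-- Discrete BDF2 trajectories `u n` with step sizes `τ n` tending to zero and with initial data
controlled uniformly in `n`. As in `bdf2Interp`, `u n (k + 1)` is the `k`-th iterate. -/
structure IsBdf2Family (E : X → EReal) (lam K₁ K₂ : ℝ) (τ : ℕ → ℝ) (u : ℕ → ℕ → X) : Prop where
  pos : ∀ n, 0 < τ n
  tendsto_zero : Tendsto τ atTop (𝓝 0)
  discreteEVI : ∀ n, IsDiscreteEVI E (τ n) lam (u n)
  energy_ne_top : ∀ n k, E (u n (k + 1)) ≠ ⊤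
  energy_init_le : ∀ n, (E (u n 1)).toReal ≤ K₁
  sq_dist_init_le : ∀ n, dist (u n 0) (u n 1) ^ 2 ≤ K₂ * τ n

namespace IsBdf2Family

lemma energy_interp_ne_top (h : IsBdf2Family E lam K₁ K₂ τ u) (n : ℕ) (t : ℝ) :
    E (bdf2Interp (u n) (τ n) t) ≠ ⊤ :=
  h.energy_ne_top n _

lemma eventually_energy_add_action_le (h : IsBdf2Family E lam K₁ K₂ τ u) :
    ∀ᶠ n in atTop, ∀ t, (E (bdf2Interp (u n) (τ n) t)).toReal + 3 / 4 * bdf2Action (u n) (τ n) t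
      ≤ K₁ + K₂ := by
  have hlim : Tendsto (fun n => -lam * τ n) atTop (𝓝 0) := by
    simpa only [mul_zero] using h.tendsto_zero.const_mul (-lam)
  filter_upwards [hlim.eventually_le_const (one_half_pos (α := ℝ))] with n hn t
  have hτ := h.pos n
  have hsum := (h.discreteEVI n).energy_add_sum_sq_le hn (h.energy_ne_top n) ⌈t / τ n⌉₊
  have hinit := mul_le_mul_of_nonneg_left (h.energy_init_le n) hτ.le
  have haction : ∑ k ∈ Finset.range (⌈t / τ n⌉₊ + 1), dist (u n k) (u n (k + 1)) ^ 2
      = τ n * bdf2Action (u n) (τ n) t := (mul_div_cancel₀ _ hτ.ne').symm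
  refine le_of_mul_le_mul_left ?_ hτ
  rw [haction] at hsum
  rw [bdf2Interp]
  linarith [h.sq_dist_init_le n]

lemma eventually_energy_le (h : IsBdf2Family E lam K₁ K₂ τ u) :
    ∀ᶠ n in atTop, ∀ t, E (bdf2Interp (u n) (τ n) t) ≤ ((K₁ + K₂ : ℝ) : EReal) := by
  filter_upwards [h.eventually_energy_add_action_le] with n hn t
  refine (EReal.le_coe_toReal (h.energy_interp_ne_top n t)).trans (EReal.coe_le_coe_iff.2 ?_)
  linarith [hn t, bdf2Action_nonneg (u n) (h.pos n) t]

lemma energy_limit_le (h : IsBdf2Family E lam K₁ K₂ τ u) (hE : LowerSemicontinuous E) {t : ℝ}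
    {x : X} (hx : Tendsto (fun n => bdf2Interp (u n) (τ n) t) atTop (𝓝 x)) :
    E x ≤ ((K₁ + K₂ : ℝ) : EReal) :=
  (hE.isClosed_preimage _).mem_of_tendsto hx (h.eventually_energy_le.mono fun _ hn => hn t)

lemma exists_action_le (h : IsBdf2Family E lam K₁ K₂ τ u) (hb : BddBelowOnBounded E) {t : ℝ}
    {x : X} (hx : Tendsto (fun n => bdf2Interp (u n) (τ n) t) atTop (𝓝 x)) :
    ∃ C, ∀ᶠ n in atTop, bdf2Action (u n) (τ n) t ≤ C := by
  obtain ⟨b, hb'⟩ := hb (Metric.ball x 1) Metric.isBounded_ball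
  refine ⟨4 / 3 * (K₁ + K₂ - b), ?_⟩
  filter_upwards [h.eventually_energy_add_action_le, hx (Metric.ball_mem_nhds x one_pos)]
    with n hn hball
  have hbn := EReal.toReal_le_toReal (hb' _ hball) (EReal.coe_ne_bot b)
    (h.energy_interp_ne_top n t)
  rw [EReal.toReal_coe] at hbn
  linarith [hn t]

theorem exists_actionBoundOn (h : IsBdf2Family E lam K₁ K₂ τ u) (hb : BddBelowOnBounded E)
    (hu : ∀ t, 0 ≤ t → Tendsto (fun n => bdf2Interp (u n) (τ n) t) atTop (𝓝 (ulim t))) :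
    ∃ V, ActionBoundOn ulim V (Ici 0) := by
  have hbdd : ∀ t ∈ Ici (0 : ℝ), ∃ C, ∀ᶠ n in atTop, |bdf2Action (u n) (τ n) t| ≤ C := by
    intro t ht
    obtain ⟨C, hC⟩ := h.exists_action_le hb (hu t ht)
    exact ⟨C, hC.mono fun n hn => by rwa [abs_of_nonneg (bdf2Action_nonneg _ (h.pos n) t)]⟩
  -- A limit along an ultrafilter serves all times at once, so no Helly selection is needed.
  obtain ⟨𝓤, h𝓤, V, hV⟩ := exists_ultrafilter_forall_tendsto hbdd
  refine ⟨V, fun s hs t ht hst => ?_⟩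
  have hdist := (((hu s hs).dist (hu t ht)).pow 2).mono_left h𝓤
  have haction : Tendsto (fun n => (t - s + τ n)
      * (bdf2Action (u n) (τ n) t - bdf2Action (u n) (τ n) s)) 𝓤
      (𝓝 ((t - s) * (V t - V s))) := by
    simpa only [add_zero] using
      ((h.tendsto_zero.mono_left h𝓤).const_add (t - s)).mul ((hV t ht).sub (hV s hs))
  exact le_of_tendsto_of_tendsto' hdist haction fun n =>
    sq_dist_bdf2Interp_le (u n) (h.pos n) hs hst

lemma exists_dist_interp_le (h : IsBdf2Family E lam K₁ K₂ τ u) (hb : BddBelowOnBounded E) {T : ℝ}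
    {x : X} (hx : Tendsto (fun n => bdf2Interp (u n) (τ n) T) atTop (𝓝 x)) (w : X) :
    ∃ R, ∀ᶠ n in atTop, ∀ r ∈ Icc 0 T, dist (bdf2Interp (u n) (τ n) r) w ≤ R := by
  obtain ⟨C, hC⟩ := h.exists_action_le hb hx
  refine ⟨√((T + 1) * C) + (dist x w + 1), ?_⟩
  filter_upwards [hC, h.tendsto_zero.eventually_le_const one_pos,
    (hx.dist tendsto_const_nhds).eventually_le_const (lt_add_one (dist x w))]
    with n hn hτ1 hdist r hr
  refine (dist_triangle _ (bdf2Interp (u n) (τ n) T) _).trans (add_le_add ?_ hdist)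
  refine Real.le_sqrt_of_sq_le ((sq_dist_bdf2Interp_le (u n) (h.pos n) hr.1 hr.2).trans ?_)
  have hpos := bdf2Action_nonneg (u n) (h.pos n)
  gcongr
  · exact sub_nonneg.2 (monotone_bdf2Action (u n) (h.pos n) hr.2)
  · linarith [hr.1, hr.2]
  · linarith [hr.1]
  · linarith [hpos r]

lemma exists_abs_eviRate_le (h : IsBdf2Family E lam K₁ K₂ τ u) (hE : LowerSemicontinuous E)
    (hb : BddBelowOnBounded E)
    (hu : ∀ t, 0 ≤ t → Tendsto (fun n => bdf2Interp (u n) (τ n) t) atTop (𝓝 (ulim t)))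
    {T : ℝ} (hT : 0 ≤ T) (w : X) :
    ∃ C, (∀ᶠ n in atTop, ∀ r ∈ Icc 0 T, |eviRate E lam w (bdf2Interp (u n) (τ n) r)| ≤ C) ∧
      ∀ r ∈ Icc 0 T, |eviRate E lam w (ulim r)| ≤ C := by
  obtain ⟨R, hR⟩ := h.exists_dist_interp_le hb (hu T hT) w
  obtain ⟨C, hC⟩ := hb.exists_abs_eviRate_le lam w (K₁ + K₂) R
  refine ⟨C, ?_, fun r hr => hC _ (h.energy_limit_le hE (hu r hr.1)) ?_⟩
  · filter_upwards [hR, h.eventually_energy_le] with n hRn hen r hr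
    exact hC _ (hen r) (hRn r hr)
  · exact le_of_tendsto ((hu r hr.1).dist tendsto_const_nhds) (hR.mono fun n hn => hn r hr)

lemma tendsto_bdf2Lyapunov (h : IsBdf2Family E lam K₁ K₂ τ u) (hb : BddBelowOnBounded E) {t : ℝ}
    {x : X} (hx : Tendsto (fun n => bdf2Interp (u n) (τ n) t) atTop (𝓝 x)) (w : X) :
    Tendsto (fun n => bdf2Lyapunov (u n) w ⌈t / τ n⌉₊) atTop (𝓝 (1 / 2 * dist x w ^ 2)) := by
  obtain ⟨C, hC⟩ := h.exists_action_le hb hx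
  have hstep : Tendsto (fun n => dist (u n ⌈t / τ n⌉₊) (u n (⌈t / τ n⌉₊ + 1)) ^ 2) atTop
      (𝓝 0) := by
    have hτC : Tendsto (fun n => τ n * C) atTop (𝓝 0) := by
      simpa only [zero_mul] using h.tendsto_zero.mul_const C
    refine squeeze_zero' (Eventually.of_forall fun n => sq_nonneg _) ?_ hτC
    filter_upwards [hC] with n hn
    exact (sq_dist_step_le_mul_bdf2Action (u n) (h.pos n) t).trans
      (mul_le_mul_of_nonneg_left hn (h.pos n).le)
  have hprev : Tendsto (fun n => u n ⌈t / τ n⌉₊) atTop (𝓝 x) := by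
    refine hx.congr_dist ?_
    simpa only [Real.sqrt_sq dist_nonneg, Real.sqrt_zero, dist_comm, bdf2Interp] using hstep.sqrt
  have hsum := ((((hx.dist (tendsto_const_nhds (x := w))).pow 2).const_mul (3 / 4)).sub
    (((hprev.dist (tendsto_const_nhds (x := w))).pow 2).const_mul (1 / 4))).add
    (hstep.const_mul (1 / 2))
  have hvalue : 3 / 4 * dist x w ^ 2 - 1 / 4 * dist x w ^ 2 + 1 / 2 * 0
      = 1 / 2 * dist x w ^ 2 := by ring
  rwa [hvalue] at hsum

lemma aemeasurable_limit [MeasurableSpace X] [BorelSpace X]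
    (hu : ∀ t, 0 ≤ t → Tendsto (fun n => bdf2Interp (u n) (τ n) t) atTop (𝓝 (ulim t))) :
    AEMeasurable ulim (volume.restrict (Ici 0)) :=
  aemeasurable_of_tendsto_metrizable_ae atTop
    (fun n => (measurable_comp_bdf2Interp id (u n) (τ n)).aemeasurable)
    ((ae_restrict_mem measurableSet_Ici).mono hu)

lemma integrableOn_eviRate_limit (h : IsBdf2Family E lam K₁ K₂ τ u) (hE : LowerSemicontinuous E)
    (hb : BddBelowOnBounded E)
    (hu : ∀ t, 0 ≤ t → Tendsto (fun n => bdf2Interp (u n) (τ n) t) atTop (𝓝 (ulim t)))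
    {s t : ℝ} (hs : 0 ≤ s) (hst : s ≤ t) (w : X) :
    IntegrableOn (fun r => eviRate E lam w (ulim r)) (Ioc s t) := by
  obtain ⟨C, -, hC⟩ := h.exists_abs_eviRate_le hE hb hu (hs.trans hst) w
  borelize X
  exact Integrable.mono' (integrable_const C)
    ((measurable_eviRate hE lam w).comp_aemeasurable ((aemeasurable_limit hu).mono_set
      fun r hr => hs.trans hr.1.le)).aestronglyMeasurable
    ((ae_restrict_mem measurableSet_Ioc).mono fun r hr => hC r ⟨hs.trans hr.1.le, hr.2⟩)

theorem evi_limit (h : IsBdf2Family E lam K₁ K₂ τ u) (hE : LowerSemicontinuous E)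
    (hb : BddBelowOnBounded E)
    (hu : ∀ t, 0 ≤ t → Tendsto (fun n => bdf2Interp (u n) (τ n) t) atTop (𝓝 (ulim t)))
    {s t : ℝ} (hs : 0 ≤ s) (hst : s ≤ t) {w : X} (hw : E w ≠ ⊤) :
    1 / 2 * dist (ulim t) w ^ 2 - 1 / 2 * dist (ulim s) w ^ 2
      ≤ ∫ r in s..t, eviRate E lam w (ulim r) := by
  have ht := hs.trans hst
  obtain ⟨C, hC, -⟩ := h.exists_abs_eviRate_le hE hb hu (T := t + 1) (by linarith) w
  have hIoc : ∀ r ∈ Ioc s t, r ∈ Icc 0 (t + 1) := fun r hr =>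
    ⟨hs.trans hr.1.le, by linarith [hr.2]⟩
  have hlyap : Tendsto (fun n => bdf2Lyapunov (u n) w ⌈t / τ n⌉₊
      - bdf2Lyapunov (u n) w ⌈s / τ n⌉₊ - 2 * C * τ n) atTop
      (𝓝 (1 / 2 * dist (ulim t) w ^ 2 - 1 / 2 * dist (ulim s) w ^ 2)) := by
    simpa only [mul_zero, sub_zero] using ((h.tendsto_bdf2Lyapunov hb (hu t ht) w).sub
      (h.tendsto_bdf2Lyapunov hb (hu s hs) w)).sub (h.tendsto_zero.const_mul (2 * C))
  rw [intervalIntegral.integral_of_le hst]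
  refine le_integral_of_eventually_le_add
    (fun n => (measurable_comp_bdf2Interp (eviRate E lam w) (u n) (τ n)).aestronglyMeasurable)
    (h.integrableOn_eviRate_limit hE hb hu hs hst w) (integrable_const C) ?_ ?_ hlyap ?_
  · filter_upwards [hC] with n hn
    exact (ae_restrict_mem measurableSet_Ioc).mono fun r hr => hn r (hIoc r hr)
  · filter_upwards [ae_restrict_mem measurableSet_Ioc] with r hr ε hε
    have hr0 := (hIoc r hr).1
    have htop := ne_top_of_le_ne_top (EReal.coe_ne_top _) (h.energy_limit_le hE (hu r hr0))
    filter_upwards [(hu r hr0).eventually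
      (eventually_eviRate_le (hE _) (hb.ne_bot _) htop lam w hε)] with n hn
    exact hn (h.energy_interp_ne_top n r)
  · filter_upwards [hC, h.tendsto_zero.eventually_le_const one_pos] with n hn hτ1
    rw [← intervalIntegral.integral_of_le hst]
    exact (h.discreteEVI n).bdf2Lyapunov_sub_le_integral (h.pos n) hw hs hst fun r hr =>
      hn r ⟨hr.1, hr.2.trans (by linarith)⟩

end IsBdf2Family

end Limit

section Minimizers

variable {X : Type*} [MetricSpace X] {E : X → EReal} {τ lam : ℝ}

lemma ne_top_of_bdf2Psi_le {u v z w : X} (h : bdf2Psi E τ u v z ≤ bdf2Psi E τ u v w)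
    (hw : E w ≠ ⊤) : E z ≠ ⊤ := by
  intro hz
  rw [bdf2Psi, hz, EReal.coe_add_top, top_le_iff] at h
  exact EReal.add_ne_top (EReal.coe_ne_top _) hw h

lemma bdf2Psi_eq_coe {w : X} (hbot : E w ≠ ⊥) (htop : E w ≠ ⊤) (u v : X) :
    bdf2Psi E τ u v w
      = ((1 / τ * dist v w ^ 2 - 1 / (4 * τ) * dist u w ^ 2 + (E w).toReal : ℝ) : EReal) := by
  rw [bdf2Psi, EReal.coe_add, EReal.coe_toReal htop hbot]

lemma add_le_of_forall_le_convexCombination_sub {a b q : ℝ}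
    (h : ∀ s ∈ Ioc (0 : ℝ) 1, a ≤ (1 - s) * a + s * b - q * s * (1 - s)) : a + q ≤ b := by
  have hlim : Tendsto (fun s : ℝ => a + q * (1 - s)) (𝓝[>] 0) (𝓝 (a + q)) :=
    (Continuous.tendsto' (by fun_prop) _ _ (by ring)).mono_left nhdsWithin_le_nhds
  refine le_of_tendsto hlim ?_
  filter_upwards [Ioc_mem_nhdsGT (zero_lt_one' ℝ)] with s hs
  refine le_of_mul_le_mul_left ?_ hs.1
  linarith [h s hs]

/-- The convexity assumption (E3) for the single step size `τ`. Of the curve joining `γ₀` to `γ₁`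
only the pointwise inequality is retained: neither its continuity nor its end points matter. -/
def Bdf2Convex (E : X → EReal) (τ lam : ℝ) : Prop :=
  ∀ u v γ₀ γ₁ : X, E γ₀ ≠ ⊤ → E γ₁ ≠ ⊤ → ∀ s ∈ Icc (0 : ℝ) 1, ∃ z,
    bdf2Psi E τ u v z
      ≤ ((1 - s : ℝ) : EReal) * bdf2Psi E τ u v γ₀ + ((s : ℝ) : EReal) * bdf2Psi E τ u v γ₁
        - ((1 / 2 * (3 / (2 * τ) + lam) * s * (1 - s) * dist γ₀ γ₁ ^ 2 : ℝ) : EReal)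

lemma Bdf2Convex.quadratic_gap (h : Bdf2Convex E τ lam) (hbot : ∀ w, E w ≠ ⊥) {u v z w : X}
    (hmin : ∀ w, bdf2Psi E τ u v z ≤ bdf2Psi E τ u v w) (hz : E z ≠ ⊤) (hw : E w ≠ ⊤) :
    1 / τ * dist v z ^ 2 - 1 / (4 * τ) * dist u z ^ 2 + (E z).toReal
        + 1 / 2 * (3 / (2 * τ) + lam) * dist z w ^ 2
      ≤ 1 / τ * dist v w ^ 2 - 1 / (4 * τ) * dist u w ^ 2 + (E w).toReal := by
  refine add_le_of_forall_le_convexCombination_sub fun s hs => ?_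
  obtain ⟨y, hy⟩ := h u v z w hz hw s (Ioc_subset_Icc_self hs)
  have hzy := (hmin y).trans hy
  rw [bdf2Psi_eq_coe (hbot z) hz, bdf2Psi_eq_coe (hbot w) hw, ← EReal.coe_mul, ← EReal.coe_mul,
    ← EReal.coe_add, ← EReal.coe_sub, EReal.coe_le_coe_iff] at hzy
  linarith

theorem Bdf2Convex.isDiscreteEVI (h : Bdf2Convex E τ lam) (hτ : 0 < τ) (hbot : ∀ w, E w ≠ ⊥)
    {v : ℕ → X}
    (hmin : ∀ k w, bdf2Psi E τ (v k) (v (k + 1)) (v (k + 2)) ≤ bdf2Psi E τ (v k) (v (k + 1)) w) :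
    IsDiscreteEVI E τ lam v := by
  intro k w hw
  have hgap := mul_le_mul_of_nonneg_left
    (h.quadratic_gap hbot (hmin k) (ne_top_of_bdf2Psi_le (hmin k w) hw) hw) hτ.le
  unfold eviRate
  field_simp at hgap
  linarith

end Minimizers

section Convergence

variable {X : Type*} [MetricSpace X] {E : X → EReal} {lam K₁ K₂ : ℝ} {τ : ℕ → ℝ} {u : ℕ → ℕ → X}

lemma isBdf2Family_of_minimizers (hbot : ∀ w, E w ≠ ⊥) (hτ : ∀ n, 0 < τ n)
    (hτlim : Tendsto τ atTop (𝓝 0)) (hconvex : ∀ n, Bdf2Convex E (τ n) lam)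
    (hmin : ∀ n k w, bdf2Psi E (τ n) (u n k) (u n (k + 1)) (u n (k + 2))
      ≤ bdf2Psi E (τ n) (u n k) (u n (k + 1)) w)
    (henergy : ∀ n, E (u n 1) ≤ (K₁ : EReal))
    (hstep : ∀ n, dist (u n 0) (u n 1) ^ 2 ≤ K₂ * τ n) : IsBdf2Family E lam K₁ K₂ τ u where
  pos := hτ
  tendsto_zero := hτlim
  discreteEVI n := (hconvex n).isDiscreteEVI (hτ n) hbot (hmin n)
  energy_ne_top n k := by
    have hinit : E (u n 1) ≠ ⊤ := ne_top_of_le_ne_top (EReal.coe_ne_top K₁) (henergy n)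
    cases k with
    | zero => exact hinit
    | succ k => exact ne_top_of_bdf2Psi_le (hmin n k (u n 1)) hinit
  energy_init_le n := EReal.toReal_le_toReal (henergy n) (hbot _) (EReal.coe_ne_top K₁)
  sq_dist_init_le := hstep

theorem bdf2_limit_is_EVI_flow_general (hE : LowerSemicontinuous E) (hb : BddBelowOnBounded E)
    (hτ : ∀ n, 0 < τ n) (hτlim : Tendsto τ atTop (𝓝 0))
    (hconvex : ∀ n, Bdf2Convex E (τ n) lam)
    (hmin : ∀ n k w, bdf2Psi E (τ n) (u n k) (u n (k + 1)) (u n (k + 2))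
      ≤ bdf2Psi E (τ n) (u n k) (u n (k + 1)) w)
    (henergy : ∀ n, E (u n 1) ≤ (K₁ : EReal))
    (hstep : ∀ n, dist (u n 0) (u n 1) ^ 2 ≤ K₂ * τ n) {ulim : ℝ → X}
    (hu : ∀ t, 0 ≤ t → Tendsto (fun n => bdf2Interp (u n) (τ n) t) atTop (𝓝 (ulim t))) :
    (∃ m : ℝ → ℝ,
      (∀ T : ℝ, 0 < T → IntegrableOn (fun r => m r ^ 2) (Icc 0 T) volume)
      ∧ ∀ s t : ℝ, 0 ≤ s → s ≤ t → dist (ulim s) (ulim t) ≤ ∫ r in s..t, m r)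
    ∧ ∀ s t : ℝ, 0 ≤ s → s ≤ t → ∀ w : X, E w ≠ ⊤ →
        (1 / 2) * dist (ulim t) w ^ 2 - (1 / 2) * dist (ulim s) w ^ 2
          ≤ ∫ r in s..t,
              ((E w).toReal - (E (ulim r)).toReal - lam / 2 * dist (ulim r) w ^ 2) := by
  have hfam := isBdf2Family_of_minimizers hb.ne_bot hτ hτlim hconvex hmin henergy hstep
  obtain ⟨V, hV⟩ := hfam.exists_actionBoundOn hb hu
  exact ⟨hV.exists_sq_integrable_speed, fun s t hs hst w hw => hfam.evi_limit hE hb hu hs hst hw⟩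

end Convergence

end

/-- main convergence theorem, part 2: the locally uniform limit `u_*` of the
piecewise constant BDF2 interpolations is an `AC²` curve and satisfies the integrated
evolution variational inequality with parameter `λ`. -/
theorem bdf2_limit_is_EVI_flow {X : Type*} [MetricSpace X] [CompleteSpace X]
    [TopologicalSpace.SeparableSpace X]
    (E : X → EReal) (hbot : ∀ w, E w ≠ ⊥) (hdom : ∃ w, E w ≠ ⊤)
    (τs lam : ℝ) (hτs : 0 < τs) (hlam : lam ≤ 0) (hlamτs : (-lam) * τs ≤ 1 / 2)
    (hE1 : ∀ (un : ℕ → X) (x : X), Tendsto un atTop (nhds x) →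
      E x ≤ liminf (fun n => E (un n)) atTop)
    (ustar : X) (cstar : EReal)
    (hcstar : cstar = ⨅ v : X, (((1 / (2 * τs)) * dist ustar v ^ 2 : ℝ) : EReal) + E v)
    (hE2 : ⊥ < cstar)
    (hE3 : ∀ τ ∈ Set.Ioo (0 : ℝ) τs, ∀ u v γ₀ γ₁ : X, E γ₀ ≠ ⊤ → E γ₁ ≠ ⊤ →
      ∃ γ : ℝ → X, ContinuousOn γ (Set.Icc 0 1) ∧ γ 0 = γ₀ ∧ γ 1 = γ₁ ∧
        ∀ s ∈ Set.Icc (0 : ℝ) 1,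
          bdf2Psi E τ u v (γ s)
            ≤ ((1 - s : ℝ) : EReal) * bdf2Psi E τ u v γ₀
              + ((s : ℝ) : EReal) * bdf2Psi E τ u v γ₁
              - ((1 / 2 * (3 / (2 * τ) + lam) * s * (1 - s) * dist γ₀ γ₁ ^ 2 : ℝ) : EReal))
    (u0pt : X) (K₀ K₁ K₂ K₃ : ℝ)
    (τ : ℕ → ℝ) (hτmem : ∀ n, τ n ∈ Set.Ioo (0 : ℝ) τs) (hτanti : StrictAnti τ)
    (hτlim : Tendsto τ atTop (nhds 0))
    (hτdiv : ∀ n, ∃ R : ℕ, τ n = (R : ℝ) * τ (n + 1))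
    (u : ℕ → ℕ → X)
    (hmin : ∀ n k : ℕ, ∀ w : X,
      bdf2Psi E (τ n) (u n k) (u n (k + 1)) (u n (k + 2))
        ≤ bdf2Psi E (τ n) (u n k) (u n (k + 1)) w)
    (hI0 : ∀ n, dist (u n 1) u0pt ≤ K₀ * τ n)
    (hI1 : ∀ n, E (u n 1) ≤ (K₁ : EReal) ∧ E (u n 0) ≤ (K₁ : EReal))
    (hI2 : ∀ n, dist (u n 0) (u n 1) ≤ K₂ * τ n)
    (hK3 : ∀ n, dist (u n 1) u0pt ≤ K₃ * τ n)
    (ulim : ℝ → X)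
    (hconv : TendstoLocallyUniformlyOn (fun n t => bdf2Interp (u n) (τ n) t) ulim atTop
      (Set.Ici (0 : ℝ))) :
    (∃ m : ℝ → ℝ,
      (∀ T : ℝ, 0 < T → IntegrableOn (fun r => m r ^ 2) (Set.Icc 0 T) volume)
      ∧ ∀ s t : ℝ, 0 ≤ s → s ≤ t →
          dist (ulim s) (ulim t) ≤ ∫ r in s..t, m r)
    ∧ ∀ s t : ℝ, 0 ≤ s → s ≤ t → ∀ w : X, E w ≠ ⊤ →
        (1 / 2) * dist (ulim t) w ^ 2 - (1 / 2) * dist (ulim s) w ^ 2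
          ≤ ∫ r in s..t,
              ((E w).toReal - (E (ulim r)).toReal - lam / 2 * dist (ulim r) w ^ 2) := by
  refine bdf2_limit_is_EVI_flow_general (K₁ := K₁) (K₂ := K₂ ^ 2 * τs)
    (lowerSemicontinuous_of_seq_le_liminf hE1)
    (bddBelowOnBounded_of_bot_lt_iInf (hE2.trans_eq hcstar)) (fun n => (hτmem n).1) hτlim
    (fun n x v γ₀ γ₁ h₀ h₁ s hs => ?_) hmin (fun n => (hI1 n).1) (fun n => ?_)
    fun t ht => hconv.tendsto_at ht
  · obtain ⟨γ, -, -, -, hγ⟩ := hE3 (τ n) (hτmem n) x v γ₀ γ₁ h₀ h₁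
    exact ⟨γ s, hγ s hs⟩
  · have hτpos := (hτmem n).1
    calc dist (u n 0) (u n 1) ^ 2 ≤ (K₂ * τ n) ^ 2 := by gcongr; exact hI2 n
      _ = K₂ ^ 2 * τ n * τ n := by ring
      _ ≤ K₂ ^ 2 * τs * τ n := by gcongr; exact (hτmem n).2.le
end

section
/- Let E(w) = max(w,0) on ℝ, let τ > 0, and let (u^k)_{k≥−1} be the BDF2 discrete solution with initial data u^{−1} = 1 + τ and u^0 = 1, i.e. for k ≥ 1, u^k is the unique minimizer over ℝ of w ↦ (1/τ)·(w − u^{k−1})² − (1/(4τ))·(w − u^{k−2})² + E(w). Then for every k ≥ 0 with 1 − kτ > 0 one has u^k = 1 − kτ. -/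
/-!
The flow of `max w 0` from a positive datum moves along a straight line, with constant subgradient
`1`, until it reaches `0`. BDF2 is exact on affine trajectories: if `a`, `b`, `p` are equally
spaced with increment `-τ • g`, then `3 • p - 4 • b + a = -(2 * τ) • g`. So if `g` is a subgradient
of `E` at `p`, then `p` solves the Euler–Lagrange inclusion of the BDF2 functional. Since the
quadratic part of that functional is `3 / (4 * τ) * ‖w‖ ^ 2` up to affine terms, `p` is then its
only minimizer.
-/

open scoped RealInnerProductSpace

variable {H : Type*} [NormedAddCommGroup H] [InnerProductSpace ℝ H]

/-- `g` is a (global) subgradient at `x` of the real-valued function `E`, that is `g ∈ ∂E(x)`.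
The function is not assumed convex. -/
def IsSubgradientAt (E : H → ℝ) (g x : H) : Prop :=
  ∀ y, E x + ⟪g, y - x⟫ ≤ E y

/-- The functional `w ↦ (1/τ) ‖w - b‖² - (1/(4τ)) ‖w - a‖² + E w` minimized in one step of the BDF2
scheme, where `b` is the last value of the discrete solution and `a` the one before it. -/
noncomputable def bdf2Functional (τ : ℝ) (E : H → ℝ) (a b w : H) : ℝ :=
  (1 / τ) * ‖w - b‖ ^ 2 - (1 / (4 * τ)) * ‖w - a‖ ^ 2 + E w

/-- `u` is a discrete solution of the BDF2 scheme for `E` with time step `τ`. The initial data are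
`u 0` and `u 1`, so `u k` is the value written `u^{k-1}` in the usual indexing. -/
def IsBDF2Solution (τ : ℝ) (E : H → ℝ) (u : ℕ → H) : Prop :=
  ∀ k, IsMinOn (bdf2Functional τ E (u k) (u (k + 1))) Set.univ (u (k + 2))

theorem isSubgradientAt_max_zero {x : ℝ} (hx : 0 ≤ x) :
    IsSubgradientAt (max · 0) 1 x := by
  intro y
  simp [max_eq_left hx]

theorem bdf2Functional_sub (τ : ℝ) (E : H → ℝ) (a b p w : H) :
    bdf2Functional τ E a b w - bdf2Functional τ E a b p =
      3 / (4 * τ) * ‖w - p‖ ^ 2 + 1 / (2 * τ) * ⟪(3 : ℝ) • p - (4 : ℝ) • b + a, w - p⟫ +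
        (E w - E p) := by
  have expand_about_p (c : H) : ‖w - c‖ ^ 2 = ‖w - p‖ ^ 2 + 2 * ⟪p - c, w - p⟫ + ‖p - c‖ ^ 2 := by
    rw [← sub_add_sub_cancel w p c, norm_add_sq_real, real_inner_comm]
  have inner_residual : ⟪(3 : ℝ) • p - (4 : ℝ) • b + a, w - p⟫ =
      4 * ⟪p - b, w - p⟫ - ⟪p - a, w - p⟫ := by
    rw [show (3 : ℝ) • p - (4 : ℝ) • b + a = (4 : ℝ) • (p - b) - (p - a) by module,
      inner_sub_left, real_inner_smul_left]
  rw [bdf2Functional, bdf2Functional, expand_about_p b, expand_about_p a, inner_residual]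
  ring

section EulerLagrange

variable {τ : ℝ} {E : H → ℝ} {a b g p : H}

theorem IsSubgradientAt.bdf2Functional_add_le (hg : IsSubgradientAt E g p) (hτ : τ ≠ 0)
    (hp : (3 : ℝ) • p - (4 : ℝ) • b + a = -(2 * τ) • g) (w : H) :
    bdf2Functional τ E a b p + 3 / (4 * τ) * ‖w - p‖ ^ 2 ≤ bdf2Functional τ E a b w := by
  have expansion := bdf2Functional_sub τ E a b p w
  have linear_part : 1 / (2 * τ) * ⟪-(2 * τ) • g, w - p⟫ = -⟪g, w - p⟫ := by
    rw [real_inner_smul_left]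
    field_simp
  rw [hp, linear_part] at expansion
  linarith [hg w]

theorem IsSubgradientAt.bdf2Functional_le_iff (hg : IsSubgradientAt E g p) (hτ : 0 < τ)
    (hp : (3 : ℝ) • p - (4 : ℝ) • b + a = -(2 * τ) • g) {w : H} :
    bdf2Functional τ E a b w ≤ bdf2Functional τ E a b p ↔ w = p := by
  refine ⟨fun hw ↦ ?_, fun hw ↦ hw ▸ le_rfl⟩
  have growth := hg.bdf2Functional_add_le hτ.ne' hp w
  have norm_sq_nonpos : ‖w - p‖ ^ 2 ≤ 0 :=
    nonpos_of_mul_nonpos_right (a := 3 / (4 * τ)) (by linarith) (by positivity)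
  simpa [sub_eq_zero] using norm_sq_nonpos.antisymm (sq_nonneg _)

end EulerLagrange

theorem bdf2_obstacle_exact_before_kink_general {τ : ℝ} (hτ : 0 < τ) {E : H → ℝ} {u : ℕ → H}
    (hu : IsBDF2Solution τ E u) {x g : H} (h0 : u 0 = x + τ • g) (h1 : u 1 = x) (k : ℕ)
    (hg : ∀ j ∈ Set.Ioc 0 k, IsSubgradientAt E g (x - (j * τ) • g)) :
    u (k + 1) = x - (k * τ) • g := by
  suffices u k = x - ((k - 1) * τ) • g ∧ u (k + 1) = x - (k * τ) • g from this.2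
  induction k with
  | zero => simp [h0, h1]
  | succ k ih =>
    obtain ⟨previous, last⟩ := ih fun j hj ↦ hg j ⟨hj.1, hj.2.trans k.le_succ⟩
    refine ⟨by simpa using last, ?_⟩
    refine ((hg (k + 1) ⟨k.succ_pos, le_rfl⟩).bdf2Functional_le_iff hτ ?_).mp
      (hu k (Set.mem_univ _))
    rw [previous, last]
    push_cast
    module

/-- for the BDF2 scheme on `ℝ` with potential `E(w) = max(w,0)` and initial
data `u^{−1} = 1 + τ`, `u^0 = 1` (encoded with index shift: `u k = u^{k−1}`), the discrete
solution is exact as long as it is positive: `u^k = 1 − kτ` whenever `1 − kτ > 0`. -/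
theorem bdf2_obstacle_exact_before_kink (τ : ℝ) (hτ : 0 < τ) (u : ℕ → ℝ)
    (h0 : u 0 = 1 + τ) (h1 : u 1 = 1)
    (hmin : ∀ k : ℕ, ∀ w : ℝ,
      (1 / τ) * (u (k + 2) - u (k + 1)) ^ 2 - (1 / (4 * τ)) * (u (k + 2) - u k) ^ 2
          + max (u (k + 2)) 0
        ≤ (1 / τ) * (w - u (k + 1)) ^ 2 - (1 / (4 * τ)) * (w - u k) ^ 2 + max w 0) :
    ∀ k : ℕ, 0 < 1 - (k : ℝ) * τ → u (k + 1) = 1 - (k : ℝ) * τ := by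
  intro k hk
  have hu : IsBDF2Solution τ (max · 0) u := fun k w _ ↦ by simpa [bdf2Functional] using hmin k w
  have trajectory_nonneg (j : ℕ) (hj : j ≤ k) : 0 ≤ 1 - (j * τ) • (1 : ℝ) := by
    have : j * τ ≤ k * τ := by gcongr
    simp only [smul_eq_mul, mul_one]
    linarith
  simpa using bdf2_obstacle_exact_before_kink_general hτ hu (g := 1) (by simpa using h0) h1 k
    fun j hj ↦ isSubgradientAt_max_zero (trajectory_nonneg j hj.2)
end
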